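/- Suppose there is a single input u_1 (m = 1), every state vertex is reachable in the state digraph from some state vertex actuated by u_1, and there is a permutation σ of the state vertices with a state edge x → σ(x) for every x. Let C^b_1,…,C^b_β be the non-bottom-linked SCCs of the state digraph, for each output j let S_j = { k ∈ {1,…,β} : some state x ∈ C^b_k has an output edge x → y_j }, and let P ∈ ℝ_{≥0}^{1×p}. Then: (1) for T ⊆ {1,…,p}, the feedback set K(T) = {(1,j) : j ∈ T} satisfies conditions (a) and (b) if and only if ⋃_{j∈T} S_j = {1,…,β}; and (2) the minimum of P(K) over all feedback sets K satisfying conditions (a) and (b) equals the minimum of Σ_{j∈T} P_{1j} over all T ⊆ {1,…,p} with ⋃_{j∈T} S_j = {1,…,β}; that is, the optimal feedback selection cost equals the optimal weight of the associated weighted set cover. -/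

import Mathlib

/-- Vertices of a structured system: states `x_1,…,x_n`, inputs `u_1,…,u_m`,
outputs `y_1,…,y_p`. -/
abbrev SVert (n m p : ℕ) : Type := Fin n ⊕ Fin m ⊕ Fin p

/-- State vertex. -/
def stX {n m p : ℕ} (a : Fin n) : SVert n m p := Sum.inl a

/-- Input vertex. -/
def stU {n m p : ℕ} (i : Fin m) : SVert n m p := Sum.inr (Sum.inl i)

/-- Output vertex. -/
def stY {n m p : ℕ} (j : Fin p) : SVert n m p := Sum.inr (Sum.inr j)

/-- Edge relation of the closed-loop digraph: state edges (given by `A`), input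
edges `u_i → x_c` (given by `B`), output edges `x_a → y_j` (given by `Co`), and
feedback edges `y_j → u_i` for `(i, j) ∈ K`. -/
def closedEdge {n m p : ℕ} (A : Fin n → Fin n → Prop) (B : Fin m → Fin n → Prop)
    (Co : Fin n → Fin p → Prop) (K : Finset (Fin m × Fin p)) :
    SVert n m p → SVert n m p → Prop
  | Sum.inl a, Sum.inl c => A a c
  | Sum.inr (Sum.inl i), Sum.inl c => B i c
  | Sum.inl a, Sum.inr (Sum.inr j) => Co a j
  | Sum.inr (Sum.inr j), Sum.inr (Sum.inl i) => (i, j) ∈ K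
  | _, _ => False

/-- Two vertices lie in the same strongly connected component: each is reachable
from the other (reachability is the reflexive–transitive closure of the edges). -/
def sameSCC {α : Type*} (E : α → α → Prop) (a b : α) : Prop :=
  Relation.ReflTransGen E a b ∧ Relation.ReflTransGen E b a

/-- Condition (a): every state vertex lies in the same SCC of the closed-loop
digraph as both endpoints `u_i`, `y_j` of some feedback edge `(i, j) ∈ K`. -/
def condA {n m p : ℕ} (A : Fin n → Fin n → Prop) (B : Fin m → Fin n → Prop)
    (Co : Fin n → Fin p → Prop) (K : Finset (Fin m × Fin p)) : Prop :=
  ∀ a : Fin n, ∃ e ∈ K,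
    sameSCC (closedEdge A B Co K) (stX a) (stU e.1) ∧
    sameSCC (closedEdge A B Co K) (stX a) (stY e.2)

/-- Condition (b): a collection of vertex-disjoint directed cycles of the
closed-loop digraph covers all state vertices.  Encoded as: there is a set `S`
of vertices containing all state vertices and a map `f` permuting `S` such that
`v → f v` is an edge for every `v ∈ S` (the cycles of `f` are the cycle
collection). -/
def condB {n m p : ℕ} (A : Fin n → Fin n → Prop) (B : Fin m → Fin n → Prop)
    (Co : Fin n → Fin p → Prop) (K : Finset (Fin m × Fin p)) : Prop :=
  ∃ (S : Set (SVert n m p)) (f : SVert n m p → SVert n m p),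
    Set.BijOn f S S ∧ (∀ a : Fin n, stX a ∈ S) ∧
    ∀ v ∈ S, closedEdge A B Co K v (f v)

/-- Cost of a feedback set under cost matrix `P`. -/
def fcost {m p : ℕ} (P : Fin m → Fin p → NNReal) (K : Finset (Fin m × Fin p)) : NNReal :=
  ∑ e ∈ K, P e.1 e.2

/-!
A non-bottom-linked SCC `C` has no outgoing state edge, so a closed-loop path starting in `C` can
only leave `C` through an output sensing `C` followed by a feedback edge. Hence condition (a) forces
`K` to use an output sensing each such SCC. Conversely, every state reaches some non-bottom-linked
SCC, hence, under a cover, the tail of a feedback edge; the head of that edge is an input, which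
reaches every state. Condition (b) is free, since the cycles of `σ` already cover the states.
-/

open Relation

section Digraph

variable {α ι : Type*} {r : α → α → Prop}

/-- A vertex reachable from everything it reaches, i.e. one whose SCC has no outgoing edge. -/
def IsTerminalVertex (r : α → α → Prop) (a : α) : Prop :=
  ∀ c, ReflTransGen r a c → ReflTransGen r c a

theorem exists_reflTransGen_isTerminalVertex [Finite α] (r : α → α → Prop) (a : α) :
    ∃ c, ReflTransGen r a c ∧ IsTerminalVertex r c := by
  let _ : Preorder α :=
    { le := ReflTransGen r
      le_refl := fun _ => .refl
      le_trans := fun _ _ _ => .trans }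
  obtain ⟨c, hac, hc⟩ := Finite.exists_le_maximal (p := fun _ : α => True) (a := a) trivial
  exact ⟨c, hac, fun _ hcd => hc.le_of_ge trivial hcd⟩

/-- The family `C` lists the non-bottom-linked SCCs of the digraph `r`: each `C k` is an SCC without
outgoing edges, and every terminal vertex lies in some `C k`. Repetitions are allowed. -/
structure IsNonBottomLinkedFamily (r : α → α → Prop) (C : ι → Set α) : Prop where
  exists_rep : ∀ k, ∃ a ∈ C k, ∀ c, c ∈ C k ↔ sameSCC r a c
  closed : ∀ k, ∀ a ∈ C k, ∀ c, r a c → c ∈ C k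
  exhaustive : ∀ a, IsTerminalVertex r a → ∃ k, a ∈ C k

namespace IsNonBottomLinkedFamily

variable {C : ι → Set α}

theorem nonempty (hC : IsNonBottomLinkedFamily r C) (k : ι) : (C k).Nonempty :=
  let ⟨a, ha, _⟩ := hC.exists_rep k
  ⟨a, ha⟩

theorem reflTransGen_of_mem (hC : IsNonBottomLinkedFamily r C) {k : ι} {a b : α}
    (ha : a ∈ C k) (hb : b ∈ C k) : ReflTransGen r a b := by
  obtain ⟨c, -, hc⟩ := hC.exists_rep k
  exact ((hc a).mp ha).2.trans ((hc b).mp hb).1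

theorem exists_forall_mem_reflTransGen [Finite α] (hC : IsNonBottomLinkedFamily r C) (a : α) :
    ∃ k, ∀ b ∈ C k, ReflTransGen r a b := by
  obtain ⟨c, hac, hc⟩ := exists_reflTransGen_isTerminalVertex r a
  obtain ⟨k, hck⟩ := hC.exhaustive c hc
  exact ⟨k, fun b hb => hac.trans (hC.reflTransGen_of_mem hck hb)⟩

end IsNonBottomLinkedFamily

end Digraph

/-- The set-cover condition `⋃_{j ∈ T} S_j = {1,…,β}` of the associated weighted set cover: every
class `C k` contains a state sensed by an output in `T`. -/
def IsSensorCover {α ω ι : Type*} (Co : α → ω → Prop) (C : ι → Set α) (T : Finset ω) : Prop :=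
  ∀ k, ∃ j ∈ T, ∃ a ∈ C k, Co a j

section ClosedLoop

variable {n m p : ℕ} {A : Fin n → Fin n → Prop} {B : Fin m → Fin n → Prop}
  {Co : Fin n → Fin p → Prop} {K : Finset (Fin m × Fin p)}

theorem reflTransGen_closedEdge_stX {a c : Fin n} (h : ReflTransGen A a c) :
    ReflTransGen (closedEdge A B Co K) (stX a) (stX c) :=
  h.lift stX fun _ _ hac => hac

/-- The states of `C` together with the outputs sensing `C`: the part of the closed-loop digraph
that can be reached from a set `C` without outgoing state edges before using a feedback edge. -/
def sensedRegion (Co : Fin n → Fin p → Prop) (C : Set (Fin n)) : SVert n m p → Prop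
  | Sum.inl a => a ∈ C
  | Sum.inr (Sum.inl _) => False
  | Sum.inr (Sum.inr j) => ∃ a ∈ C, Co a j

theorem sensedRegion_of_closedEdge {C : Set (Fin n)} (hC : ∀ a ∈ C, ∀ c, A a c → c ∈ C)
    (hK : ∀ e ∈ K, ∀ a ∈ C, ¬ Co a e.2) {v w : SVert n m p}
    (hv : sensedRegion Co C v) (hvw : closedEdge A B Co K v w) : sensedRegion Co C w :=
  match v, w, hv, hvw with
  | Sum.inl a, Sum.inl c, ha, hac => hC a ha c hac
  | Sum.inl a, Sum.inr (Sum.inr _), ha, haj => ⟨a, ha, haj⟩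
  | Sum.inr (Sum.inr _), Sum.inr (Sum.inl _), ⟨a, ha, haj⟩, hij => hK _ hij a ha haj

theorem sensedRegion_of_reflTransGen {C : Set (Fin n)} (hC : ∀ a ∈ C, ∀ c, A a c → c ∈ C)
    (hK : ∀ e ∈ K, ∀ a ∈ C, ¬ Co a e.2) {v w : SVert n m p}
    (hv : sensedRegion Co C v) (hvw : ReflTransGen (closedEdge A B Co K) v w) :
    sensedRegion Co C w := by
  induction hvw with
  | refl => exact hv
  | tail _ hstep ih => exact sensedRegion_of_closedEdge hC hK ih hstep

theorem condA.exists_sensed (hA : condA A B Co K) {C : Set (Fin n)} (hne : C.Nonempty)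
    (hC : ∀ a ∈ C, ∀ c, A a c → c ∈ C) : ∃ e ∈ K, ∃ a ∈ C, Co a e.2 := by
  by_contra! hK
  obtain ⟨a, ha⟩ := hne
  obtain ⟨e, -, ⟨hau, -⟩, -⟩ := hA a
  exact sensedRegion_of_reflTransGen (v := stX a) (w := stU e.1) hC hK ha hau

theorem sameSCC_closedEdge_of_mem {e : Fin m × Fin p} (he : e ∈ K) {s a b : Fin n}
    (hs : B e.1 s) (hsa : ReflTransGen A s a) (hab : ReflTransGen A a b) (hb : Co b e.2) :
    sameSCC (closedEdge A B Co K) (stX a) (stU e.1) ∧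
      sameSCC (closedEdge A B Co K) (stX a) (stY e.2) := by
  have state_to_output : ReflTransGen (closedEdge A B Co K) (stX a) (stY e.2) :=
    (reflTransGen_closedEdge_stX hab).tail hb
  have feedback : closedEdge A B Co K (stY e.2) (stU e.1) := he
  have input_to_state : ReflTransGen (closedEdge A B Co K) (stU e.1) (stX a) :=
    .head (b := stX s) hs (reflTransGen_closedEdge_stX hsa)
  exact ⟨⟨state_to_output.tail feedback, input_to_state⟩,
    ⟨state_to_output, .head feedback input_to_state⟩⟩

theorem condA_iff_isSensorCover {ι : Type*} {C : ι → Set (Fin n)}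
    (hreach : ∀ i a, ∃ s, B i s ∧ ReflTransGen A s a) (hC : IsNonBottomLinkedFamily A C) :
    condA A B Co K ↔ IsSensorCover Co C (K.image Prod.snd) := by
  constructor
  · intro hA k
    obtain ⟨e, he, hsensed⟩ := hA.exists_sensed (hC.nonempty k) (hC.closed k)
    exact ⟨e.2, Finset.mem_image_of_mem _ he, hsensed⟩
  · intro hcover a
    obtain ⟨k, hk⟩ := hC.exists_forall_mem_reflTransGen a
    obtain ⟨j, hj, b, hb, hbj⟩ := hcover k
    obtain ⟨e, he, rfl⟩ := Finset.mem_image.mp hj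
    obtain ⟨s, hs, hsa⟩ := hreach e.1 a
    exact ⟨e, he, sameSCC_closedEdge_of_mem he hs hsa (hk b hb) hbj⟩

theorem condB_of_perm (σ : Equiv.Perm (Fin n)) (hσ : ∀ a, A a (σ a)) : condB A B Co K := by
  refine ⟨Set.range stX, σ.sumCongr (.refl _), Equiv.bijOn _ ?_, Set.mem_range_self, ?_⟩
  · rintro (a | v) <;> simp [stX]
  · rintro _ ⟨a, rfl⟩
    exact hσ a

end ClosedLoop

theorem fcost_image_mk {m p : ℕ} (P : Fin m → Fin p → NNReal) (i : Fin m) (T : Finset (Fin p)) :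
    fcost P (T.image fun j => (i, j)) = ∑ j ∈ T, P i j :=
  Finset.sum_image (Prod.mk_right_injective i).injOn

theorem image_mk_surjective {ι ω : Type*} [Subsingleton ι] [DecidableEq ι] [DecidableEq ω] (i : ι) :
    Function.Surjective fun T : Finset ω => T.image fun j => (i, j) := by
  refine fun K => ⟨K.image Prod.snd, ?_⟩
  have rebuild (e : ι × ω) : (i, e.2) = e := Prod.ext (Subsingleton.elim _ _) rfl
  exact Finset.image_image.trans <|
    (Finset.image_congr fun e _ => rebuild e).trans Finset.image_id

/-- single-input case with a perfect matching of the state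
bipartite graph.  With `Cb 1, …, Cb β` the non-bottom-linked SCCs of the state
digraph and `S_j = {k : some state of Cb k is sensed by y_j}`: (1) the feedback
set `{(1, j) : j ∈ T}` satisfies conditions (a) and (b) iff the sets `S_j`,
`j ∈ T`, cover `{1,…,β}`; and (2) the optimal feedback-selection cost equals
the optimal weight of the associated weighted set cover. -/
theorem single_input_setCover_equivalence {n p β : ℕ}
    (A : Fin n → Fin n → Prop) (B : Fin 1 → Fin n → Prop) (Co : Fin n → Fin p → Prop)
    (hreach : ∀ a : Fin n, ∃ s : Fin n, B 0 s ∧ Relation.ReflTransGen A s a)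
    (σ : Equiv.Perm (Fin n)) (hσ : ∀ a : Fin n, A a (σ a))
    (Cb : Fin β → Set (Fin n))
    (hscc : ∀ k : Fin β, ∃ a ∈ Cb k, ∀ c : Fin n,
      c ∈ Cb k ↔ (Relation.ReflTransGen A a c ∧ Relation.ReflTransGen A c a))
    (hnb : ∀ k : Fin β, ∀ a ∈ Cb k, ∀ c : Fin n, A a c → c ∈ Cb k)
    (hall : ∀ a : Fin n,
      (∀ c : Fin n, Relation.ReflTransGen A a c → Relation.ReflTransGen A c a) →
      ∃ k : Fin β, a ∈ Cb k)
    (P : Fin 1 → Fin p → NNReal) :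
    (∀ T : Finset (Fin p),
      (condA A B Co (T.image fun j => ((0 : Fin 1), j)) ∧
        condB A B Co (T.image fun j => ((0 : Fin 1), j))) ↔
      (∀ k : Fin β, ∃ j ∈ T, ∃ a ∈ Cb k, Co a j)) ∧
    sInf {c : NNReal | ∃ K : Finset (Fin 1 × Fin p),
        condA A B Co K ∧ condB A B Co K ∧ c = fcost P K}
      = sInf {c : NNReal | ∃ T : Finset (Fin p),
          (∀ k : Fin β, ∃ j ∈ T, ∃ a ∈ Cb k, Co a j) ∧ c = ∑ j ∈ T, P 0 j} := by
  have hC : IsNonBottomLinkedFamily A Cb := ⟨hscc, hnb, hall⟩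
  have hreach' : ∀ i a, ∃ s, B i s ∧ ReflTransGen A s a := Fin.forall_fin_one.mpr hreach
  have feasible_iff (T : Finset (Fin p)) :
      (condA A B Co (T.image fun j => ((0 : Fin 1), j)) ∧
        condB A B Co (T.image fun j => ((0 : Fin 1), j))) ↔
      ∀ k, ∃ j ∈ T, ∃ a ∈ Cb k, Co a j := by
    rw [condA_iff_isSensorCover hreach' hC, Finset.image_image, Prod.snd_comp_mk, Finset.image_id,
      and_iff_left (condB_of_perm σ hσ), IsSensorCover]
  refine ⟨feasible_iff, ?_⟩
  simp only [(image_mk_surjective (0 : Fin 1)).exists, ← and_assoc, feasible_iff, fcost_image_mk]
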